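/- arXiv:2405.01465 — 4 statements merged into one kernel-verified Lean document; each statement's English description precedes it below -/
import Mathlib

section
/- Let p ≥ 1 be an integer, γ > 0, f ∈ C₀^{2p}([0,γ]) with f ≥ 0, let N ≥ 1 be an integer, h = γ/N, x_j = j·h, and let f̄ ∈ ℝ^{N+1} be given by f̄(x_j) = f(x_j). Then there exists a constant C₁ > 0 depending only on p and γ such that for every integer n ≥ 2 and every k ∈ {0,1,…,N}, |f̄^{⊛n}(x_k) − f^{*n}(x_k)| ≤ (1+x_k)^{n−2} · C₁ · C₂(n,x_k) · N^{−2p}. -/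
/-- The `n`-fold continuous convolution of `f` with itself on `[0,∞)`. -/
noncomputable def iterConv (f : ℝ → ℝ) : ℕ → ℝ → ℝ
  | 0 => fun _ => 0
  | 1 => f
  | n + 2 => fun x => ∫ y in (0:ℝ)..x, iterConv f (n + 1) y * f (x - y)

/-- The `h`-scaled discrete linear convolution. -/
def dconv (h : ℝ) (g₁ g₂ : ℕ → ℝ) (k : ℕ) : ℝ :=
  h * ∑ j ∈ Finset.range (k + 1), g₁ j * g₂ (k - j)

/-- The `n`-fold `⊛`-power of a vector. -/
def dpow (h : ℝ) (f : ℕ → ℝ) : ℕ → ℕ → ℝ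
  | 0 => f
  | 1 => f
  | n + 2 => dconv h (dpow h f (n + 1)) f

/-- The constant `C₂(n, x_k)`:
`C₂(n,x_k) = max_{m=2,…,n} max_{j₁+⋯+j_{m−1}=k}
  [ max_{0≤y≤x_{j₁}} |d^{2p}/dy^{2p}( f^{*(n+1−m)}(y)·f(x_{j₁}−y) )|
      · Π_{ℓ=2}^{m−1} f(x_{j_ℓ}) ]`,
with the empty product equal to `1` when `m = 2`. Here `m' = m − 2` ranges over
`0,…,n−2` and tuples `(j₁,…,j_{m−1})` are indexed by `Fin (m'+1)`. -/
noncomputable def C2 (p : ℕ) (f : ℝ → ℝ) (h : ℝ) (n k : ℕ) : ℝ :=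
  ⨆ m' ∈ Finset.range (n - 1),
    ⨆ t ∈ Finset.Nat.antidiagonalTuple (m' + 1) k,
      (⨆ y ∈ Set.Icc (0:ℝ) ((t 0 : ℝ) * h),
          |iteratedDerivWithin (2 * p)
              (fun z => iterConv f (n - 1 - m') z * f ((t 0 : ℝ) * h - z))
              (Set.Icc (0:ℝ) ((t 0 : ℝ) * h)) y|)
        * ∏ i ∈ Finset.univ.filter (fun i : Fin (m' + 1) => i ≠ 0), f ((t i : ℝ) * h)


section ConvAux
open Set Filter Topology MeasureTheory intervalIntegral

/-- All derivatives of order `< Q` vanish at `a`, and the function is `C^Q`. -/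
def Van (Q : ℕ) (f : ℝ → ℝ) (a : ℝ) : Prop :=
  ContDiff ℝ Q f ∧ ∀ i < Q, iteratedDeriv i f a = 0

lemma van_succ {Q : ℕ} {f : ℝ → ℝ} {a : ℝ} :
    Van (Q + 1) f a ↔ Differentiable ℝ f ∧ f a = 0 ∧ Van Q (deriv f) a := by
  unfold Van
  push_cast
  rw [contDiff_succ_iff_deriv]
  constructor
  · rintro ⟨⟨h1, _, h2⟩, h3⟩
    refine ⟨h1, by simpa using h3 0 (by omega), h2, fun i hi => ?_⟩
    rw [← iteratedDeriv_succ']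
    exact h3 (i + 1) (by omega)
  · rintro ⟨h1, h2, h3, h4⟩
    refine ⟨⟨h1, by simp, h3⟩, fun i hi => ?_⟩
    cases i with
    | zero => simpa using h2
    | succ i =>
      rw [iteratedDeriv_succ']
      exact h4 i (by omega)

lemma exists_ext (γ : ℝ) (hγ : 0 < γ) (Q : ℕ) : ∀ f : ℝ → ℝ,
    ContDiffOn ℝ Q f (Icc 0 γ) → (∀ k < Q, iteratedDerivWithin k f (Icc 0 γ) 0 = 0) →
    ∃ g : ℝ → ℝ, Van Q g 0 ∧ ∀ x ∈ Icc (0:ℝ) γ, g x = f x := by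
  induction Q with
  | zero =>
    intro f hf _
    refine ⟨IccExtend hγ.le ((Icc 0 γ).domRestrict f), ⟨?_, by simp⟩, ?_⟩
    · simp only [CharP.cast_eq_zero, contDiff_zero]
      have : ContinuousOn f (Icc 0 γ) := hf.continuousOn
      exact (continuousOn_iff_continuous_domRestrict.1 this).Icc_extend'
    · intro x hx
      rw [IccExtend_of_mem _ _ hx]; rfl
  | succ Q ih =>
    intro f hf hv
    have hu : UniqueDiffOn ℝ (Icc 0 γ) := uniqueDiffOn_Icc hγ
    push_cast at hf
    have hf' := hf
    rw [contDiffOn_succ_iff_derivWithin hu] at hf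
    obtain ⟨h1, _, h2⟩ := hf
    obtain ⟨g, hg, hgf⟩ := ih (derivWithin f (Icc 0 γ)) h2 (fun k hk => by
      rw [← iteratedDerivWithin_succ']
      exact hv (k + 1) (by omega))
    have hgc : Continuous g := hg.1.continuous
    have hd : ∀ x, HasDerivAt (fun x => ∫ y in (0:ℝ)..x, g y) (g x) x := fun x =>
      integral_hasDerivAt_right (hgc.intervalIntegrable _ _)
        (hgc.stronglyMeasurableAtFilter _ _) hgc.continuousAt
    refine ⟨fun x => ∫ y in (0:ℝ)..x, g y, ?_, ?_⟩
    · rw [van_succ]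
      refine ⟨fun x => (hd x).differentiableAt, by simp, ?_⟩
      have : deriv (fun x => ∫ y in (0:ℝ)..x, g y) = g := funext fun x => (hd x).deriv
      rwa [this]
    · intro x hx
      have h0 : f 0 = 0 := by simpa using hv 0 (by omega)
      have : ∫ y in (0:ℝ)..x, g y = f x - f 0 := by
        apply integral_eq_sub_of_hasDerivAt_of_le hx.1
        · exact h1.continuousOn.mono (Icc_subset_Icc_right hx.2)
        · intro y hy
          have hy' : y ∈ Icc 0 γ := ⟨hy.1.le, hy.2.le.trans hx.2⟩
          rw [hgf y hy']
          exact (h1 y hy').hasDerivWithinAt.hasDerivAt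
            (Icc_mem_nhds hy.1 (hy.2.trans_le hx.2))
        · exact hgc.intervalIntegrable _ _
      simp only [this, h0, sub_zero]

lemma conv_continuous {F f : ℝ → ℝ} (hF : Continuous F) (hf : Continuous f) :
    Continuous (fun x => ∫ y in (0:ℝ)..x, F y * f (x - y)) := by
  apply continuous_parametric_intervalIntegral_of_continuous (f := fun x y => F y * f (x - y))
  · unfold Function.uncurry
    fun_prop
  · fun_prop

lemma conv_hasDerivAt {F f f' : ℝ → ℝ} (hF : Continuous F) (hf' : Continuous f')
    (hd : ∀ x, HasDerivAt f (f' x) x) (h0 : f 0 = 0) (x₀ : ℝ) :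
    HasDerivAt (fun x => ∫ y in (0:ℝ)..x, F y * f (x - y))
      (∫ y in (0:ℝ)..x₀, F y * f' (x₀ - y)) x₀ := by
  have hf : Continuous f := continuous_iff_continuousAt.2 fun x => (hd x).continuousAt
  have hsplit : (fun x => ∫ y in (0:ℝ)..x, F y * f (x - y)) =
      fun x => (∫ y in (0:ℝ)..x₀, F y * f (x - y)) + ∫ y in x₀..x, F y * f (x - y) := by
    funext x
    rw [integral_add_adjacent_intervals] <;>
      exact Continuous.intervalIntegrable (by fun_prop) _ _
  rw [hsplit, ← add_zero (∫ y in (0:ℝ)..x₀, F y * f' (x₀ - y))]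
  apply HasDerivAt.add
  · have hc : Continuous (fun q : ℝ × ℝ => F q.2 * f' (q.1 - q.2)) := by fun_prop
    obtain ⟨B, hB⟩ := ((isCompact_closedBall x₀ (1:ℝ)).prod (isCompact_uIcc (a := 0) (b := x₀))).exists_bound_of_continuousOn hc.continuousOn
    refine (intervalIntegral.hasDerivAt_integral_of_dominated_loc_of_deriv_le
      (F := fun x y => F y * f (x - y)) (F' := fun x y => F y * f' (x - y))
      (bound := fun _ => B) (Metric.closedBall_mem_nhds x₀ one_pos) ?_ ?_ ?_ ?_ ?_ ?_).2
    · exact Eventually.of_forall fun x => (Continuous.aestronglyMeasurable (by fun_prop))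
    · exact Continuous.intervalIntegrable (by fun_prop) _ _
    · exact (Continuous.aestronglyMeasurable (by fun_prop))
    · exact Eventually.of_forall fun t ht x hx => hB (x, t) ⟨hx, uIoc_subset_uIcc ht⟩
    · exact intervalIntegrable_const
    · refine Eventually.of_forall fun t ht x hx => ?_
      have := (hd (x - t)).comp x ((hasDerivAt_id x).sub_const t)
      simpa using this.const_mul (F t)
  · rw [hasDerivAt_iff_isLittleO, Asymptotics.isLittleO_iff]
    intro c hc
    have hcc : Continuous (fun q : ℝ × ℝ => F q.2 * f (q.1 - q.2)) := by fun_prop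
    have := Metric.continuous_iff.1 hcc (x₀, x₀) c hc
    obtain ⟨δ, hδ, h⟩ := this
    filter_upwards [Metric.ball_mem_nhds x₀ hδ] with x hx
    simp only [integral_same, sub_zero, smul_zero]
    rw [Real.norm_eq_abs (x - x₀)]
    apply intervalIntegral.norm_integral_le_of_norm_le_const
    intro y hy
    have hx' : dist x x₀ < δ := hx
    have hy' : dist y x₀ < δ := by
      rw [Real.dist_eq] at hx' ⊢
      have : y ∈ uIcc x₀ x := uIoc_subset_uIcc hy
      have := abs_sub_left_of_mem_uIcc this
      exact this.trans_lt hx'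
    have := h (x, y) (by rw [Prod.dist_eq]; exact max_lt hx' hy')
    rw [dist_eq_norm] at this
    simp only [sub_self, h0, mul_zero, sub_zero] at this
    exact this.le

lemma van_conv {F : ℝ → ℝ} (hF : Continuous F) (Q : ℕ) : ∀ f : ℝ → ℝ, Van Q f 0 →
    Van Q (fun x => ∫ y in (0:ℝ)..x, F y * f (x - y)) 0 := by
  induction Q with
  | zero =>
    rintro f ⟨hf, _⟩
    refine ⟨?_, by simp⟩
    simp only [CharP.cast_eq_zero, contDiff_zero]
    exact conv_continuous hF hf.continuous
  | succ Q ih =>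
    intro f hf
    rw [van_succ] at hf ⊢
    obtain ⟨h1, h2, h3⟩ := hf
    have hd := conv_hasDerivAt hF h3.1.continuous (fun x => (h1 x).hasDerivAt) h2
    refine ⟨fun x => (hd x).differentiableAt, by simp, ?_⟩
    rw [show deriv _ = _ from funext fun x => (hd x).deriv]
    exact ih _ h3

lemma van_iterConv {Q : ℕ} {f : ℝ → ℝ} (hf : Van Q f 0) (n : ℕ) : Van Q (iterConv f (n + 1)) 0 := by
  induction n with
  | zero => exact hf
  | succ n ih => exact van_conv ih.1.continuous Q f hf

lemma iterConv_congr {f g : ℝ → ℝ} {γ : ℝ} (h : ∀ x ∈ Icc (0:ℝ) γ, g x = f x) (n : ℕ) :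
    ∀ x ∈ Icc (0:ℝ) γ, iterConv g (n + 1) x = iterConv f (n + 1) x := by
  induction n with
  | zero => exact h
  | succ n ih =>
    intro x hx
    apply integral_congr
    intro y hy
    rw [uIcc_of_le hx.1] at hy
    show iterConv g (n + 1) y * g (x - y) = iterConv f (n + 1) y * f (x - y)
    rw [ih y ⟨hy.1, hy.2.trans hx.2⟩, h (x - y) ⟨by linarith [hy.2], by linarith [hy.1, hx.2]⟩]

lemma van_mul {Q : ℕ} {f g : ℝ → ℝ} {a : ℝ} (hf : Van Q f a) (hg : ContDiff ℝ Q g) :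
    Van Q (fun x => f x * g x) a := by
  refine ⟨hf.1.mul hg, fun i hi => ?_⟩
  have hi' : (i : WithTop ℕ∞) ≤ Q := by exact_mod_cast hi.le
  rw [iteratedDeriv_fun_mul (hf.1.of_le hi').contDiffAt (hg.of_le hi').contDiffAt]
  apply Finset.sum_eq_zero
  intro j hj
  rw [hf.2 j (by simp at hj; omega)]
  simp

lemma van_sub {Q : ℕ} {f : ℝ → ℝ} (hf : Van Q f 0) (x : ℝ) : Van Q (fun z => f (x - z)) x := by
  refine ⟨hf.1.comp (contDiff_const.sub contDiff_id), fun i hi => ?_⟩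
  rw [iteratedDeriv_comp_const_sub]
  simp [hf.2 i hi]

/-- quadrature -/
lemma quad_step {g g' : ℝ → ℝ} (hg' : Continuous g') (hd : ∀ x, HasDerivAt g (g' x) x)
    (h : ℝ) (q : ℕ) (j : ℕ) :
    (q + 1) * ∫ t in (0:ℝ)..1, bernoulliFun q t * g (h * (j + t)) =
      bernoulliFun (q + 1) 1 * g (h * (j + 1)) - bernoulliFun (q + 1) 0 * g (h * j)
        - h * ∫ t in (0:ℝ)..1, bernoulliFun (q + 1) t * g' (h * (j + t)) := by
  have hg : Continuous g := continuous_iff_continuousAt.2 fun x => (hd x).continuousAt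
  have := integral_mul_deriv_eq_deriv_mul (a := 0) (b := 1)
    (u := fun t => g (h * (j + t))) (u' := fun t => h * g' (h * (j + t)))
    (v := bernoulliFun (q + 1)) (v' := fun t => (q + 1) * bernoulliFun q t)
    (fun t _ => by
      have := (hd (h * (j + t))).comp t (((hasDerivAt_id t).const_add (j:ℝ)).const_mul h)
      convert! this using 1
      simp; ring)
    (fun t _ => by simpa using hasDerivAt_bernoulliFun (q + 1) t)
    (Continuous.intervalIntegrable (by fun_prop) _ _)
    (Continuous.intervalIntegrable (by fun_prop) _ _)
  rw [← intervalIntegral.integral_const_mul, ← intervalIntegral.integral_const_mul]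
  convert this using 1
  · congr 1; ext t; ring
  · simp only [add_zero]
    congr 1
    · ring
    · congr 1; ext t; ring

noncomputable def AA (G : ℝ → ℝ) (h : ℝ) (k q : ℕ) : ℝ :=
  ∑ j ∈ Finset.range k, ∫ t in (0:ℝ)..1, bernoulliFun q t * iteratedDeriv q G (h * (j + t))

lemma AA_step {Q : ℕ} {G : ℝ → ℝ} {h : ℝ} {k : ℕ} (hG : ContDiff ℝ Q G) {q : ℕ} (hq : q < Q) :
    (q + 1) * AA G h k q = ∑ j ∈ Finset.range k,
      (bernoulliFun (q + 1) 1 * iteratedDeriv q G (h * (j + 1))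
        - bernoulliFun (q + 1) 0 * iteratedDeriv q G (h * j)) - h * AA G h k (q + 1) := by
  unfold AA
  rw [Finset.mul_sum, Finset.mul_sum, ← Finset.sum_sub_distrib]
  refine Finset.sum_congr rfl fun j _ => quad_step ?_ ?_ h q j
  · exact hG.continuous_iteratedDeriv _ (by exact_mod_cast hq)
  · intro x
    rw [iteratedDeriv_succ]
    exact (hG.differentiable_iteratedDeriv q (by exact_mod_cast hq) x).hasDerivAt

lemma AA_succ {Q : ℕ} {G : ℝ → ℝ} {h : ℝ} {k : ℕ} (hG : Van Q G 0) (hG' : Van Q G (k * h))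
    {q : ℕ} (hq0 : 1 ≤ q) (hq : q < Q) (hh : 0 ≤ h) : |AA G h k q| ≤ h * |AA G h k (q + 1)| := by
  have h1 := AA_step (h := h) (k := k) hG.1 hq
  rw [bernoulliFun_endpoints_eq_of_ne_one (by omega)] at h1
  have h2 := Finset.sum_range_sub (fun j : ℕ => bernoulliFun (q + 1) 0 * iteratedDeriv q G (h * j)) k
  push_cast at h2
  rw [h2, mul_comm h k, hG'.2 q hq, mul_zero, mul_zero, hG.2 q hq] at h1
  have h3 : (q + 1) * |AA G h k q| = h * |AA G h k (q + 1)| := by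
    rw [← abs_of_nonneg hh, ← abs_mul, ← abs_neg (_ * _), abs_of_nonneg hh,
      ← abs_of_nonneg (show (0:ℝ) ≤ q + 1 by positivity), ← abs_mul, h1]
    congr 1; ring
  rw [← h3]
  have : (0:ℝ) ≤ q := by positivity
  nlinarith [abs_nonneg (AA G h k q)]

lemma quad_zero {Q : ℕ} {G : ℝ → ℝ} {h : ℝ} {k : ℕ} (hG : Van Q G 0) (hG' : Van Q G (k * h))
    (hQ : 1 ≤ Q) : h * ∑ j ∈ Finset.range (k + 1), G (j * h) - ∫ y in (0:ℝ)..(k * h), G y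
      = h ^ 2 * AA G h k 1 := by
  have h1 := AA_step (h := h) (k := k) hG.1 (q := 0) hQ
  have g0 : G 0 = 0 := by simpa using hG.2 0 hQ
  have gk : G (k * h) = 0 := by simpa using hG'.2 0 hQ
  have hc : Continuous G := hG.1.continuous
  have hA : h * AA G h k 0 = ∫ y in (0:ℝ)..(k * h), G y := by
    have := sum_integral_adjacent_intervals (f := G) (a := fun j : ℕ => j * h) (μ := volume)
      (n := k) (fun j _ => hc.intervalIntegrable _ _)
    simp only [CharP.cast_eq_zero, zero_mul] at this
    rw [← this, AA, Finset.mul_sum]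
    refine Finset.sum_congr rfl fun j _ => ?_
    have := mul_integral_comp_mul_add (a := 0) (b := 1) (f := G) h (h * j)
    simp only [bernoulliFun_zero, one_mul, iteratedDeriv_zero]
    rw [show (fun t : ℝ => G (h * (j + t))) = fun t => G (h * t + h * j) by ext; ring_nf, this]
    push_cast
    congr 1 <;> ring
  simp only [zero_add, bernoulliFun_one, iteratedDeriv_zero, CharP.cast_eq_zero, one_mul] at h1
  have h2 := Finset.sum_range_sub (fun j : ℕ => G (j * h)) k
  have h3 : ∑ j ∈ Finset.range k, ((1 - 1 / 2) * G (h * (j + 1)) - (0 - 1 / 2) * G (h * j)) =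
     ∑ j ∈ Finset.range k, ((1 / 2) * (G ((j + 1 : ℕ) * h) - G (j * h)) + G (j * h)) := by
    refine Finset.sum_congr rfl fun j _ => ?_
    push_cast
    rw [mul_comm h j, mul_comm h (j + 1 : ℝ)]; ring
  rw [h3, Finset.sum_add_distrib, ← Finset.mul_sum, h2] at h1
  rw [Finset.sum_range_succ, ← hA, h1, gk]
  simp only [CharP.cast_eq_zero, zero_mul, g0, gk]
  ring

lemma quad {p : ℕ} {G : ℝ → ℝ} {h β M : ℝ} {k : ℕ} (hG : Van (p + 1) G 0)
    (hG' : Van (p + 1) G (k * h)) (hh : 0 ≤ h) (hM0 : 0 ≤ M)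
    (hβ : ∀ t ∈ Icc (0:ℝ) 1, |bernoulliFun (p + 1) t| ≤ β)
    (hM : ∀ y ∈ Icc (0:ℝ) (k * h), |iteratedDeriv (p + 1) G y| ≤ M) :
    |h * ∑ j ∈ Finset.range (k + 1), G (j * h) - ∫ y in (0:ℝ)..(k * h), G y|
      ≤ h ^ (p + 1) * (k * h) * (β * M) := by
  rw [quad_zero hG hG' (by omega)]
  have h1 : ∀ q ≤ p, |AA G h k 1| ≤ h ^ q * |AA G h k (q + 1)| := by
    intro q hq
    induction q with
    | zero => simp
    | succ q ih =>
      refine (ih (by omega)).trans ?_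
      rw [pow_succ, mul_assoc]
      gcongr
      exact AA_succ hG hG' (by omega) (by omega) hh
  have h2 : |AA G h k (p + 1)| ≤ k * (β * M) := by
    unfold AA
    refine (Finset.abs_sum_le_sum_abs _ _).trans ?_
    have : ∀ j ∈ Finset.range k, |∫ t in (0:ℝ)..1, bernoulliFun (p + 1) t *
        iteratedDeriv (p + 1) G (h * (j + t))| ≤ β * M := by
      intro j hj
      have := intervalIntegral.norm_integral_le_of_norm_le_const (a := 0) (b := 1) (C := β * M)
        (f := fun t => bernoulliFun (p + 1) t * iteratedDeriv (p + 1) G (h * (j + t))) (by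
          intro t ht
          rw [uIoc_of_le zero_le_one] at ht
          rw [norm_mul]
          have hjk : (j:ℝ) + 1 ≤ k := by exact_mod_cast Finset.mem_range.1 hj
          have hb := hβ t ⟨ht.1.le, ht.2⟩
          have hj0 : (0:ℝ) ≤ j := by positivity
          apply mul_le_mul hb (hM _ ⟨?_, ?_⟩) (abs_nonneg _) ((abs_nonneg _).trans hb)
          · exact mul_nonneg hh (by linarith [ht.1])
          · rw [mul_comm]
            exact mul_le_mul_of_nonneg_right (by linarith [ht.2]) hh)
      simpa using this
    simpa using Finset.sum_le_sum this
  rw [abs_mul, abs_of_nonneg (by positivity : (0:ℝ) ≤ h ^ 2)]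
  calc h ^ 2 * |AA G h k 1| ≤ h ^ 2 * (h ^ p * (k * (β * M))) := by
        gcongr
        exact (h1 p le_rfl).trans (by gcongr)
    _ = _ := by ring

lemma le_biSup_finset {ι : Type*} (s : Finset ι) (F : ι → ℝ) {i : ι} (hi : i ∈ s) :
    F i ≤ ⨆ j ∈ s, F j := by
  have hb : BddAbove (range fun j => ⨆ (_ : j ∈ s), F j) := by
    refine ⟨∑ j ∈ s, |F j|, ?_⟩
    rintro _ ⟨j, rfl⟩
    refine Real.iSup_le (fun hj => ?_) (Finset.sum_nonneg fun _ _ => abs_nonneg _)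
    exact (le_abs_self _).trans
      (Finset.single_le_sum (f := fun j => |F j|) (fun _ _ => abs_nonneg _) hj)
  refine le_ciSup_of_le hb i ?_
  rw [ciSup_pos hi]

lemma le_biSup_set (s : Set ℝ) (F : ℝ → ℝ) {B : ℝ} (hB : ∀ i ∈ s, F i ≤ B) {i : ℝ} (hi : i ∈ s) :
    F i ≤ ⨆ j ∈ s, F j := by
  have hb : BddAbove (range fun j => ⨆ (_ : j ∈ s), F j) := by
    refine ⟨max B 0, ?_⟩
    rintro _ ⟨j, rfl⟩
    exact Real.iSup_le (fun hj => (hB j hj).trans (le_max_left _ _)) (le_max_right _ _)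
  refine le_ciSup_of_le hb i ?_
  rw [ciSup_pos hi]

lemma prod_filter_ne_zero (m : ℕ) (g : Fin (m + 1) → ℝ) :
    ∏ i ∈ Finset.univ.filter (fun i : Fin (m + 1) => i ≠ 0), g i = ∏ i : Fin m, g i.succ := by
  rw [Finset.prod_filter, Fin.prod_univ_succ]
  simp

/-- The inner maximum in `C2`. -/
noncomputable def DD (p : ℕ) (f : ℝ → ℝ) (h : ℝ) (m a : ℕ) : ℝ :=
  ⨆ y ∈ Set.Icc (0:ℝ) ((a : ℝ) * h),
          |iteratedDerivWithin (2 * p)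
              (fun z => iterConv f m z * f ((a : ℝ) * h - z))
              (Set.Icc (0:ℝ) ((a : ℝ) * h)) y|

lemma DD_nonneg (p : ℕ) (f : ℝ → ℝ) (h : ℝ) (m a : ℕ) : 0 ≤ DD p f h m a :=
  Real.iSup_nonneg fun _ => Real.iSup_nonneg fun _ => abs_nonneg _

lemma C2_eq (p : ℕ) (f : ℝ → ℝ) (h : ℝ) (n k : ℕ) : C2 p f h n k =
    ⨆ m' ∈ Finset.range (n - 1), ⨆ t ∈ Finset.Nat.antidiagonalTuple (m' + 1) k,
      DD p f h (n - 1 - m') (t 0) * ∏ i : Fin m', f ((t i.succ : ℝ) * h) := by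
  unfold C2
  simp only [prod_filter_ne_zero]
  rfl

lemma le_C2 (p : ℕ) (f : ℝ → ℝ) (h : ℝ) (n k m' : ℕ) (hm : m' < n - 1) (t : Fin (m' + 1) → ℕ)
    (ht : ∑ i, t i = k) :
    DD p f h (n - 1 - m') (t 0) * ∏ i : Fin m', f ((t i.succ : ℝ) * h) ≤ C2 p f h n k := by
  rw [C2_eq]
  refine le_trans ?_ (le_biSup_finset (Finset.range (n - 1)) _ (Finset.mem_range.2 hm))
  exact le_biSup_finset (Finset.Nat.antidiagonalTuple (m' + 1) k)
    (fun t => DD p f h (n - 1 - m') (t 0) * ∏ i : Fin m', f ((t i.succ : ℝ) * h))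
    (Finset.Nat.mem_antidiagonalTuple.2 ht)

lemma DD_le_C2 (p : ℕ) (f : ℝ → ℝ) (h : ℝ) (n k : ℕ) :
    DD p f h (n + 1) k ≤ C2 p f h (n + 2) k := by
  have := le_C2 p f h (n + 2) k 0 (by omega) (fun _ => k) (by simp)
  simpa using this

lemma C2_step (p : ℕ) (f : ℝ → ℝ) (h : ℝ) (n j l : ℕ) (hf : 0 ≤ f (l * h)) :
    C2 p f h n j * f (l * h) ≤ C2 p f h (n + 1) (j + l) ∨ n < 2 := by
  by_cases hn : n < 2
  · exact Or.inr hn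
  left
  have h0 : 0 ≤ C2 p f h (n + 1) (j + l) := by
    obtain ⟨r, rfl⟩ : ∃ r, n = r + 1 := ⟨n - 1, by omega⟩
    exact (DD_nonneg _ _ _ _ _).trans (DD_le_C2 p f h r (j + l))
  rcases hf.eq_or_lt with hz | hpos
  · rw [← hz, mul_zero]; exact h0
  rw [← le_div_iff₀ hpos, C2_eq]
  have hB : 0 ≤ C2 p f h (n + 1) (j + l) / f (l * h) := by positivity
  refine Real.iSup_le (fun m' => Real.iSup_le (fun hm => Real.iSup_le (fun t =>
    Real.iSup_le (fun ht => ?_) hB) hB) hB) hB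
  rw [le_div_iff₀ hpos]
  rw [Finset.Nat.mem_antidiagonalTuple] at ht
  rw [Finset.mem_range] at hm
  have := le_C2 p f h (n + 1) (j + l) (m' + 1) (by omega) (Fin.snoc t l : Fin (m' + 2) → ℕ) (by
    rw [Fin.sum_univ_castSucc]; simp [ht])
  refine le_trans (le_of_eq ?_) this
  rw [Fin.prod_univ_castSucc, ← mul_assoc]
  congr 2
  · congr 1
    omega
  · refine Finset.prod_congr rfl fun i _ => ?_
    rw [Fin.succ_castSucc, Fin.snoc_castSucc (α := fun _ => ℕ)]
  · rw [Fin.succ_last, Fin.snoc_last]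

lemma local_error {p : ℕ} (hp : 1 ≤ p) {γ h β : ℝ} (hγ : 0 < γ) {f : ℝ → ℝ}
    (hf : ContDiffOn ℝ (2 * p) f (Set.Icc 0 γ))
    (hv : ∀ k < 2 * p, iteratedDerivWithin k f (Set.Icc 0 γ) 0 = 0)
    (hβ : ∀ t ∈ Icc (0:ℝ) 1, |bernoulliFun (2 * p) t| ≤ β) (hh : 0 < h) (k : ℕ) (hk : k * h ≤ γ)
    (m : ℕ) :
    |h * ∑ j ∈ Finset.range (k + 1), iterConv f (m + 1) (j * h) * f ((k - j : ℕ) * h)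
      - iterConv f (m + 2) (k * h)| ≤ h ^ (2 * p) * (k * h) * (β * DD p f h (m + 1) k) := by
  have f0 : f 0 = 0 := by simpa using hv 0 (by omega)
  rcases Nat.eq_zero_or_pos k with rfl | hk0
  · simp [f0, iterConv]
  have hkh : 0 < k * h := by positivity
  obtain ⟨g, hg, hgf⟩ := exists_ext γ hγ (2 * p) f (by exact_mod_cast hf) hv
  obtain ⟨q, hq⟩ : ∃ q, 2 * p = q + 1 := ⟨2 * p - 1, by omega⟩
  set G : ℝ → ℝ := fun z => iterConv g (m + 1) z * g (k * h - z) with hGdef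
  have hGf : ∀ z ∈ Icc (0:ℝ) (k * h), iterConv f (m + 1) z * f (k * h - z) = G z := by
    intro z hz
    simp only [hGdef]
    rw [iterConv_congr hgf m z ⟨hz.1, hz.2.trans hk⟩,
      hgf (k * h - z) ⟨by linarith [hz.2], by linarith [hz.1]⟩]
  have hG0 : Van (2 * p) G 0 := van_mul (van_iterConv hg m) (van_sub hg _).1
  have hG1 : Van (2 * p) G (k * h) := by
    have := van_mul (van_sub hg (k * h)) (van_iterConv hg m).1
    simpa only [hGdef, mul_comm] using this
  have hder : ∀ y ∈ Icc (0:ℝ) (k * h), iteratedDerivWithin (2 * p)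
      (fun z => iterConv f (m + 1) z * f (k * h - z)) (Icc (0:ℝ) (k * h)) y
      = iteratedDeriv (2 * p) G y := by
    intro y hy
    rw [iteratedDerivWithin_congr (show EqOn _ G _ from hGf) hy]
    exact iteratedDerivWithin_eq_iteratedDeriv (uniqueDiffOn_Icc hkh)
      (hG0.1.contDiffAt.of_le (by norm_cast)) hy
  obtain ⟨B, hB⟩ := (isCompact_Icc (a := (0:ℝ)) (b := k * h)).exists_bound_of_continuousOn
    (hG0.1.continuous_iteratedDeriv (2 * p) le_rfl).continuousOn
  have hM : ∀ y ∈ Icc (0:ℝ) (k * h), |iteratedDeriv (2 * p) G y| ≤ DD p f h (m + 1) k := by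
    intro y hy
    have := le_biSup_set (Icc (0:ℝ) (k * h)) (fun y => |iteratedDerivWithin (2 * p)
      (fun z => iterConv f (m + 1) z * f (k * h - z)) (Icc (0:ℝ) (k * h)) y|) (B := B)
      (fun z hz => by rw [hder z hz]; exact hB z hz) hy
    simp only [hder y hy] at this
    exact this
  rw [hq] at hG0 hG1 hβ hM ⊢
  have key := quad hG0 hG1 hh.le (DD_nonneg _ _ _ _ _) hβ hM
  have e1 : ∑ j ∈ Finset.range (k + 1), iterConv f (m + 1) (j * h) * f ((k - j : ℕ) * h) =
      ∑ j ∈ Finset.range (k + 1), G (j * h) := by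
    refine Finset.sum_congr rfl fun j hj => ?_
    have hjk : j ≤ k := by simpa [Nat.lt_succ_iff] using hj
    rw [← hGf (j * h) ⟨by positivity, by gcongr⟩, Nat.cast_sub hjk, sub_mul]
  have e2 : iterConv f (m + 2) (k * h) = ∫ y in (0:ℝ)..(k * h), G y := by
    apply integral_congr
    intro z hz
    rw [uIcc_of_le hkh.le] at hz
    exact hGf z hz
  rw [e1, e2]
  exact key

lemma main_ind {p : ℕ} (hp : 1 ≤ p) {γ h β : ℝ} (hγ : 0 < γ) {f : ℝ → ℝ}
    (hf : ContDiffOn ℝ (2 * p) f (Set.Icc 0 γ))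
    (hpos : ∀ x ∈ Set.Icc (0:ℝ) γ, 0 ≤ f x)
    (hv : ∀ k < 2 * p, iteratedDerivWithin k f (Set.Icc 0 γ) 0 = 0)
    (hβ : ∀ t ∈ Icc (0:ℝ) 1, |bernoulliFun (2 * p) t| ≤ β) (hh : 0 < h) (r : ℕ) :
    ∀ k : ℕ, k * h ≤ γ →
    |dpow h (fun j => f (j * h)) (r + 2) k - iterConv f (r + 2) (k * h)|
      ≤ (1 + k * h) ^ r * (h ^ (2 * p) * γ * β) * C2 p f h (r + 2) k := by
  have f0 : f 0 = 0 := by simpa using hv 0 (by omega)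
  have hβ0 : 0 ≤ β := (abs_nonneg _).trans (hβ 0 (by simp))
  have hloc : ∀ m k : ℕ, k * h ≤ γ →
      |h * ∑ j ∈ Finset.range (k + 1), iterConv f (m + 1) (j * h) * f ((k - j : ℕ) * h)
      - iterConv f (m + 2) (k * h)| ≤ (h ^ (2 * p) * γ * β) * C2 p f h (m + 2) k := by
    intro m k hk
    refine (local_error hp hγ hf hv hβ hh k hk m).trans ?_
    have h1 := DD_le_C2 p f h m k
    have h2 := DD_nonneg p f h (m + 1) k
    calc _ ≤ h ^ (2 * p) * γ * (β * C2 p f h (m + 2) k) := by gcongr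
      _ = _ := by ring
  induction r with
  | zero =>
    intro k hk
    have := hloc 0 k hk
    simpa [dpow, dconv, iterConv] using this
  | succ r ih =>
    intro k hk
    set K := h ^ (2 * p) * γ * β with hK
    have hK0 : 0 ≤ K := by positivity
    set C := C2 p f h (r + 3) k with hC
    have hC0 : 0 ≤ C := (DD_nonneg _ _ _ _ _).trans (DD_le_C2 p f h (r + 1) k)
    set E : ℕ → ℝ := fun j => dpow h (fun j => f (j * h)) (r + 2) j - iterConv f (r + 2) (j * h)
      with hE
    have hsplit : dpow h (fun j => f (j * h)) (r + 3) k - iterConv f (r + 3) (k * h) =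
        h * ∑ j ∈ Finset.range k, E j * f ((k - j : ℕ) * h) +
        (h * ∑ j ∈ Finset.range (k + 1), iterConv f (r + 2) (j * h) * f ((k - j : ℕ) * h)
          - iterConv f (r + 3) (k * h)) := by
      have : ∑ j ∈ Finset.range k, E j * f ((k - j : ℕ) * h) =
          ∑ j ∈ Finset.range (k + 1), E j * f ((k - j : ℕ) * h) := by
        rw [Finset.sum_range_succ]; simp [f0]
      rw [this]
      simp only [hE, sub_mul, Finset.sum_sub_distrib]
      simp only [dpow, dconv]
      ring
    have hterm : ∀ j ∈ Finset.range k, |E j * f ((k - j : ℕ) * h)| ≤ (1 + k * h) ^ r * K * C := by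
      intro j hj
      have hjk : j < k := Finset.mem_range.1 hj
      have hjk' : (j : ℝ) ≤ k := by exact_mod_cast hjk.le
      have hjh : j * h ≤ k * h := by gcongr
      have hl : ((k - j : ℕ) : ℝ) * h ≤ γ := by
        refine le_trans ?_ hk
        gcongr
        omega
      have hfl : 0 ≤ f ((k - j : ℕ) * h) := hpos _ ⟨by positivity, hl⟩
      have hc := (C2_step p f h (r + 2) j (k - j) hfl).resolve_right (by omega)
      rw [Nat.add_sub_cancel' hjk.le] at hc
      rw [abs_mul, abs_of_nonneg hfl]
      calc |E j| * f ((k - j : ℕ) * h)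
          ≤ ((1 + j * h) ^ r * K * C2 p f h (r + 2) j) * f ((k - j : ℕ) * h) := by
            gcongr
            exact ih j (hjh.trans hk)
        _ = ((1 + j * h) ^ r * K) * (C2 p f h (r + 2) j * f ((k - j : ℕ) * h)) := by ring
        _ ≤ ((1 + k * h) ^ r * K) * C := by
            have hc0 : 0 ≤ C2 p f h (r + 2) j :=
              (DD_nonneg _ _ _ _ _).trans (DD_le_C2 p f h r j)
            gcongr
    have hsum : |h * ∑ j ∈ Finset.range k, E j * f ((k - j : ℕ) * h)| ≤
        h * (k * ((1 + k * h) ^ r * K * C)) := by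
      rw [abs_mul, abs_of_pos hh]
      gcongr
      refine (Finset.abs_sum_le_sum_abs _ _).trans ((Finset.sum_le_sum hterm).trans ?_)
      simp
    have h1 : 1 ≤ (1 + k * h) ^ r := one_le_pow₀ (by linarith [show 0 ≤ k * h by positivity])
    have h2 : K * C ≤ (1 + k * h) ^ r * (K * C) := le_mul_of_one_le_left (by positivity) h1
    calc _ ≤ h * (k * ((1 + k * h) ^ r * K * C)) + K * C := by
          rw [show r + 1 + 2 = r + 3 from rfl, hsplit]
          exact (abs_add_le _ _).trans (add_le_add hsum (hloc (r + 1) k hk))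
      _ ≤ h * (k * ((1 + k * h) ^ r * K * C)) + (1 + k * h) ^ r * (K * C) := by linarith
      _ = _ := by rw [pow_succ]; ring

end ConvAux

/-- Error bound for the iterated discrete (trapezoidal-rule) convolution: there is a constant
`C₁ > 0`, depending only on `p` and `γ`, such that for every `f ∈ C₀^{2p}([0,γ])` nonnegative,
every `N ≥ 1` (with `h = γ/N`, `x_j = j·h`, `f̄(x_j) = f(x_j)`), every `n ≥ 2` and every
`k ∈ {0,…,N}`:
`|f̄^{⊛n}(x_k) − f^{*n}(x_k)| ≤ (1+x_k)^{n−2} · C₁ · C₂(n,x_k) · N^{−2p}`. -/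
theorem dpow_iterConv_error
    (p : ℕ) (hp : 1 ≤ p) (γ : ℝ) (hγ : 0 < γ) :
    ∃ C₁ : ℝ, 0 < C₁ ∧
      ∀ f : ℝ → ℝ,
        ContDiffOn ℝ (2 * p) f (Set.Icc 0 γ) →
        (∀ x ∈ Set.Icc (0:ℝ) γ, 0 ≤ f x) →
        (∀ k < 2 * p, iteratedDerivWithin k f (Set.Icc 0 γ) 0 = 0) →
        ∀ N : ℕ, 1 ≤ N →
          ∀ n : ℕ, 2 ≤ n →
            ∀ k ≤ N,
              |dpow (γ / N) (fun j => f (j * (γ / N))) n k - iterConv f n (k * (γ / N))|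
                ≤ (1 + k * (γ / N)) ^ (n - 2) * C₁ * C2 p f (γ / N) n k
                    * ((N : ℝ) ^ (2 * p))⁻¹ := by
  obtain ⟨β, hβ⟩ := (isCompact_Icc (a := (0:ℝ)) (b := 1)).exists_bound_of_continuousOn
    (continuous_bernoulliFun (2 * p)).continuousOn
  have hβ0 : 0 ≤ β := (norm_nonneg _).trans (hβ 0 (by simp))
  refine ⟨γ ^ (2 * p) * γ * (β + 1), by positivity, ?_⟩
  intro f hf hpos hv N hN n hn k hk
  obtain ⟨r, rfl⟩ : ∃ r, n = r + 2 := ⟨n - 2, by omega⟩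
  have hN0 : (0:ℝ) < N := by exact_mod_cast hN
  have hkN : (k:ℝ) * (γ / N) ≤ γ := by
    rw [mul_div_assoc', div_le_iff₀ hN0, mul_comm]
    have : (k:ℝ) ≤ N := by exact_mod_cast hk
    gcongr
  have := main_ind hp hγ hf hpos hv (β := β + 1)
    (fun t ht => (hβ t ht).trans (by linarith)) (div_pos hγ hN0) r k hkN
  refine this.trans (le_of_eq ?_)
  rw [div_pow, div_eq_mul_inv (γ ^ (2 * p))]
  simp only [Nat.add_sub_cancel]
  ring
end

section
/- Let p ≥ 1 be an integer, γ > 0, f ∈ C₀^{2p}([0,γ]) with f ≥ 0, let N ≥ 1 be an integer, h = γ/N, x_j = j·h, and f̄(x_j) = f(x_j). Then there exists a constant C₁ > 0 depending only on p and γ such that for every k ∈ {0,1,…,N}, the discrete convolution f̄^{⊛2}(x_k) = h·Σ_{j=0}^{k} f(x_j) f(x_{k−j}) satisfies |f̄^{⊛2}(x_k) − f^{*2}(x_k)| ≤ C₁ · max_{0≤y≤x_k} |d^{2p}/dy^{2p}( f(y)·f(x_k−y) )| · N^{−2p}. -/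
/-- The continuous self-convolution `f^{*2}(x) = ∫₀ˣ f(y) f(x−y) dy`. -/
noncomputable def conv2 (f : ℝ → ℝ) (x : ℝ) : ℝ :=
  ∫ y in (0:ℝ)..x, f y * f (x - y)

/-- The trapezoidal-rule/discrete self-convolution
`f̄^{⊛2}(x_k) = h · Σ_{j=0}^{k} f(x_j) f(x_{k−j})` with `x_j = j·h`. -/
noncomputable def dconv2 (f : ℝ → ℝ) (h : ℝ) (k : ℕ) : ℝ :=
  h * ∑ j ∈ Finset.range (k + 1), f (j * h) * f ((k - j : ℕ) * h)

open Set MeasureTheory intervalIntegral in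
lemma em_piece (h : ℝ) (hh : 0 < h) (m j : ℕ) (G G' : ℝ → ℝ)
    (hG : ContinuousOn G (Icc (j * h) ((j + 1 : ℕ) * h)))
    (hG' : ContinuousOn G' (Icc (j * h) ((j + 1 : ℕ) * h)))
    (hd : ∀ y ∈ Ioo (j * h) ((j + 1 : ℕ) * h), HasDerivAt G (G' y) y) :
    ∫ t in (j * h)..((j + 1 : ℕ) * h), bernoulliFun m (t / h - j) * G t =
      h / (m + 1) * (bernoulliFun (m + 1) 1 * G ((j + 1 : ℕ) * h)
        - bernoulliFun (m + 1) 0 * G (j * h)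
        - ∫ t in (j * h)..((j + 1 : ℕ) * h), bernoulliFun (m + 1) (t / h - j) * G' t) := by
  have hab : (j : ℝ) * h ≤ ((j + 1 : ℕ) : ℝ) * h := by push_cast; nlinarith
  have hcB : ∀ n, Continuous (fun t : ℝ => bernoulliFun n (t / h - j)) := by
    intro n
    exact (continuous_bernoulliFun n).comp (by fun_prop)
  have key := integral_mul_deriv_eq_deriv_mul_of_hasDerivAt
    (a := j * h) (b := (j + 1 : ℕ) * h)
    (u := fun t => bernoulliFun (m + 1) (t / h - j))
    (u' := fun t => (m + 1) / h * bernoulliFun m (t / h - j)) (v := G) (v' := G')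
    (hcB _).continuousOn (by rwa [uIcc_of_le hab])
    (by
      intro x _
      have h1 : HasDerivAt (fun t : ℝ => t / h - j) (1 / h) x :=
        ((hasDerivAt_id x).div_const h).sub_const _
      have h2 := (hasDerivAt_bernoulliFun (m + 1) (x / h - j)).comp x h1
      refine HasDerivAt.congr_deriv h2 ?_
      rw [Nat.add_sub_cancel]
      push_cast
      ring)
    (by rw [min_eq_left hab, max_eq_right hab]; exact hd)
    ((continuous_const.mul (hcB m)).intervalIntegrable _ _)
    (by apply ContinuousOn.intervalIntegrable; rwa [uIcc_of_le hab])
  have e1 : ((j + 1 : ℕ) : ℝ) * h / h - j = 1 := by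
    rw [mul_div_cancel_right₀ _ hh.ne']; push_cast; ring
  have e0 : (j : ℝ) * h / h - j = 0 := by
    rw [mul_div_cancel_right₀ _ hh.ne']; ring
  simp only [e1, e0, mul_assoc] at key
  rw [intervalIntegral.integral_const_mul] at key
  rw [key]
  have : (m : ℝ) + 1 ≠ 0 := by positivity
  field_simp
  ring

open Set MeasureTheory intervalIntegral in
lemma em_formula (h : ℝ) (hh : 0 < h) (k n : ℕ) (G : ℕ → ℝ → ℝ)
    (hc : ∀ m ≤ n, ContinuousOn (G m) (Icc 0 (k * h)))
    (hd : ∀ m < n, ∀ y ∈ Ioo 0 (k * h), HasDerivAt (G m) (G (m + 1) y) y)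
    (h0 : ∀ m < n, G m 0 = 0) (h1 : ∀ m < n, G m (k * h) = 0) (m : ℕ) (hm : m + 1 ≤ n) :
    h * ∑ j ∈ Finset.range k, G 0 ((j + 1 : ℕ) * h) - ∫ t in (0 : ℝ)..(k * h), G 0 t =
      (-1) ^ m * h ^ (m + 1) / (m + 1).factorial *
        ∑ j ∈ Finset.range k, ∫ t in (j * h)..((j + 1 : ℕ) * h),
          bernoulliFun (m + 1) (t / h - j) * G (m + 1) t := by
  have sub : ∀ j ∈ Finset.range k, (0 : ℝ) ≤ j * h ∧ ((j + 1 : ℕ) : ℝ) * h ≤ k * h := by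
    intro j hj
    have : j + 1 ≤ k := Finset.mem_range.1 hj
    have h2 : ((j + 1 : ℕ) : ℝ) ≤ k := by exact_mod_cast this
    exact ⟨by positivity, by gcongr⟩
  have step : ∀ m < n, ∑ j ∈ Finset.range k, ∫ t in (j * h)..((j + 1 : ℕ) * h),
          bernoulliFun m (t / h - j) * G m t =
        h / (m + 1) * ((if m = 0 then 1 else 0) * ∑ j ∈ Finset.range k, G m ((j + 1 : ℕ) * h)
          - ∑ j ∈ Finset.range k, ∫ t in (j * h)..((j + 1 : ℕ) * h),
          bernoulliFun (m + 1) (t / h - j) * G (m + 1) t) := by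
    intro m hm
    have tele : ∑ j ∈ Finset.range k, (G m ((j + 1 : ℕ) * h) - G m (j * h)) = 0 := by
      rw [Finset.sum_range_sub (fun j : ℕ => G m (j * h))]
      simp [h0 m hm, h1 m hm]
    have : ∀ j ∈ Finset.range k, ∫ t in (j * h)..((j + 1 : ℕ) * h),
          bernoulliFun m (t / h - j) * G m t =
        h / (m + 1) * (bernoulliFun (m + 1) 0 * (G m ((j + 1 : ℕ) * h) - G m (j * h))
          + (if m = 0 then 1 else 0) * G m ((j + 1 : ℕ) * h)
          - ∫ t in (j * h)..((j + 1 : ℕ) * h),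
          bernoulliFun (m + 1) (t / h - j) * G (m + 1) t) := by
      intro j hj
      obtain ⟨s1, s2⟩ := sub j hj
      rw [em_piece h hh m j (G m) (G (m + 1)) ((hc m hm.le).mono (Icc_subset_Icc s1 s2))
        ((hc (m + 1) hm).mono (Icc_subset_Icc s1 s2))
        (fun y hy => hd m hm y (Ioo_subset_Ioo s1 s2 hy)), bernoulliFun_eval_one]
      simp only [Nat.add_eq_right]
      ring
    rw [Finset.sum_congr rfl this, ← Finset.mul_sum, Finset.sum_sub_distrib,
      Finset.sum_add_distrib, ← Finset.mul_sum, ← Finset.mul_sum, tele]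
    ring
  induction m with
  | zero =>
    have s := step 0 (by omega)
    simp only [bernoulliFun_zero, one_mul, if_true, Nat.cast_zero, zero_add, div_one] at s
    have hadj := sum_integral_adjacent_intervals (f := G 0) (μ := volume)
      (a := fun j : ℕ => (j : ℝ) * h) (n := k) (by
        intro j hj
        obtain ⟨s1, s2⟩ := sub j (Finset.mem_range.2 hj)
        apply ContinuousOn.intervalIntegrable
        rw [uIcc_of_le (by push_cast; nlinarith)]
        exact (hc 0 (by omega)).mono (Icc_subset_Icc s1 s2))
    simp only [Nat.cast_zero, zero_mul] at hadj
    rw [← hadj, s]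
    simp
    ring
  | succ m ih =>
    rw [ih (by omega), step (m + 1) (by omega)]
    rw [Nat.factorial_succ (m + 1)]
    have : ((m + 1).factorial : ℝ) ≠ 0 := by positivity
    have h3 : (m : ℝ) + 1 + 1 ≠ 0 := by positivity
    rw [if_neg (Nat.succ_ne_zero m)]
    push_cast
    field_simp
    ring

open Set MeasureTheory intervalIntegral in
lemma em_bound (n : ℕ) (hn : 1 ≤ n) : ∃ C : ℝ, 0 < C ∧
    ∀ (h : ℝ) (_ : 0 < h) (k : ℕ) (G : ℕ → ℝ → ℝ) (M : ℝ)
    (_ : ∀ m ≤ n, ContinuousOn (G m) (Icc 0 (k * h)))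
    (_ : ∀ m < n, ∀ y ∈ Ioo 0 (k * h), HasDerivAt (G m) (G (m + 1) y) y)
    (_ : ∀ m < n, G m 0 = 0) (_ : ∀ m < n, G m (k * h) = 0)
    (_ : ∀ y ∈ Icc 0 (k * h), |G n y| ≤ M),
    |h * ∑ j ∈ Finset.range k, G 0 ((j + 1 : ℕ) * h) - ∫ t in (0 : ℝ)..(k * h), G 0 t| ≤
      C * h ^ n * (k * h) * M := by
  obtain ⟨B, hB⟩ := isCompact_Icc.exists_bound_of_continuousOn (s := Icc (0 : ℝ) 1)
    (continuous_bernoulliFun n).continuousOn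
  have hB0 : 0 ≤ B := (norm_nonneg _).trans (hB 0 (by simp))
  refine ⟨B + 1, by linarith, ?_⟩
  intro h hh k G M hc hd h0 h1 hM
  obtain ⟨m, rfl⟩ : ∃ m, n = m + 1 := ⟨n - 1, by omega⟩
  rw [em_formula h hh k (m + 1) G hc hd h0 h1 m le_rfl]
  have hM0 : 0 ≤ M := (abs_nonneg _).trans (hM 0 ⟨le_rfl, by positivity⟩)
  have hS : |∑ j ∈ Finset.range k, ∫ t in (j * h)..((j + 1 : ℕ) * h),
          bernoulliFun (m + 1) (t / h - j) * G (m + 1) t| ≤ k * (B * M * h) := by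
    refine (Finset.abs_sum_le_sum_abs _ _).trans ?_
    rw [show (k : ℝ) * (B * M * h) = ∑ j ∈ Finset.range k, B * M * h by simp]
    refine Finset.sum_le_sum fun j hj => ?_
    have hjk : j + 1 ≤ k := Finset.mem_range.1 hj
    have h2 : ((j + 1 : ℕ) : ℝ) ≤ k := by exact_mod_cast hjk
    have h3 : ((j + 1 : ℕ) : ℝ) * h ≤ k * h := by gcongr
    have := norm_integral_le_of_norm_le_const (a := j * h) (b := (j + 1 : ℕ) * h) (C := B * M)
      (f := fun t => bernoulliFun (m + 1) (t / h - j) * G (m + 1) t) (by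
        intro t ht
        rw [uIoc_of_le (by push_cast; nlinarith)] at ht
        rw [norm_mul]
        have hj0 : (0 : ℝ) ≤ j * h := by positivity
        apply mul_le_mul (hB _ _) (hM _ ⟨hj0.trans ht.1.le, ht.2.trans h3⟩) (abs_nonneg _) hB0
        constructor
        · rw [sub_nonneg, le_div_iff₀ hh]; exact ht.1.le
        · rw [sub_le_iff_le_add, div_le_iff₀ hh]
          have := ht.2
          push_cast at this
          linarith)
    rw [Real.norm_eq_abs] at this
    refine this.trans (le_of_eq ?_)
    congr 1
    push_cast
    rw [show ((j : ℝ) + 1) * h - j * h = h by ring, abs_of_pos hh]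
  rw [abs_mul, abs_div, abs_mul, abs_pow, abs_neg, abs_one, one_pow, one_mul,
    abs_of_pos (pow_pos hh _), Nat.abs_cast]
  have hf : (1 : ℝ) ≤ (m + 1).factorial := by exact_mod_cast Nat.factorial_pos _
  calc h ^ (m + 1) / (m + 1).factorial * _ ≤ h ^ (m + 1) * (k * (B * M * h)) := by
        gcongr
        exact div_le_self (by positivity) hf
    _ = B * h ^ (m + 1) * (k * h) * M := by ring
    _ ≤ _ := by gcongr; linarith

open Set Pointwise in
lemma conv_deriv_zero (n : ℕ) (γ x : ℝ) (hx : 0 < x) (hxγ : x ≤ γ) (f : ℝ → ℝ)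
    (hf : ContDiffOn ℝ n f (Icc 0 γ))
    (hz : ∀ k < n, iteratedDerivWithin k f (Icc 0 γ) 0 = 0) :
    ContDiffOn ℝ n (fun z => f z * f (x - z)) (Icc 0 x) ∧
    ∀ m < n, iteratedDerivWithin m (fun z => f z * f (x - z)) (Icc 0 x) 0 = 0 ∧
      iteratedDerivWithin m (fun z => f z * f (x - z)) (Icc 0 x) x = 0 := by
  have hfx : ContDiffOn ℝ n f (Icc 0 x) := hf.mono (Icc_subset_Icc le_rfl hxγ)
  have hmap : MapsTo (fun z => x - z) (Icc 0 x) (Icc 0 x) := by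
    intro z hz
    exact ⟨by linarith [hz.2], by linarith [hz.1]⟩
  have hfr : ContDiffOn ℝ n (fun z => f (x - z)) (Icc 0 x) :=
    hfx.comp (by fun_prop) hmap
  have hu : UniqueDiffOn ℝ (Icc 0 x) := uniqueDiffOn_Icc hx
  have huγ : UniqueDiffOn ℝ (Icc 0 γ) := uniqueDiffOn_Icc (hx.trans_le hxγ)
  have m0 : (0 : ℝ) ∈ Icc 0 x := ⟨le_rfl, hx.le⟩
  have mx : x ∈ Icc 0 x := ⟨hx.le, le_rfl⟩
  have hz' : ∀ k < n, iteratedDerivWithin k f (Icc 0 x) 0 = 0 := by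
    intro k hk
    have hzk := hz k hk
    rw [iteratedDerivWithin] at hzk ⊢
    rwa [iteratedFDerivWithin_subset (Icc_subset_Icc le_rfl hxγ) hu huγ
        (hf.of_le (by exact_mod_cast hk.le)) m0]
  have hset : x +ᵥ -(Icc 0 x) = Icc 0 x := by
    ext z
    simp
  have hzr : ∀ k < n, iteratedDerivWithin k (fun z => f (x - z)) (Icc 0 x) x = 0 := by
    intro k hk
    rw [iteratedDerivWithin_comp_const_sub, hset]
    simp [hz' k hk]
  refine ⟨hfx.mul hfr, fun m hm => ?_⟩
  have hmn : (m : WithTop ℕ∞) ≤ n := by exact_mod_cast hm.le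
  have e : (fun z => f z * f (x - z)) = f * (fun z => f (x - z)) := rfl
  rw [e, iteratedDerivWithin_mul m0 hu ((hfx.of_le hmn) 0 m0) ((hfr.of_le hmn) 0 m0),
    iteratedDerivWithin_mul mx hu ((hfx.of_le hmn) x mx) ((hfr.of_le hmn) x mx)]
  constructor
  · refine Finset.sum_eq_zero fun i hi => ?_
    rw [hz' i (by have := Finset.mem_range.1 hi; omega)]; ring
  · refine Finset.sum_eq_zero fun i hi => ?_
    rw [hzr (m - i) (by omega)]; ring

/-- Trapezoidal-rule error bound for the discrete self-convolution: there exists a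
constant `C₁ > 0`, depending only on `p` and `γ`, such that for every nonnegative
`f ∈ C₀^{2p}([0,γ])`, every `N ≥ 1` (with `h = γ/N`, `x_j = j·h`) and every `k ≤ N`,
`|f̄^{⊛2}(x_k) − f^{*2}(x_k)|
  ≤ C₁ · max_{0≤y≤x_k} |d^{2p}/dy^{2p}( f(y)·f(x_k−y) )| · N^{−2p}`. -/
theorem dconv2_error
    (p : ℕ) (hp : 1 ≤ p) (γ : ℝ) (hγ : 0 < γ) :
    ∃ C₁ : ℝ, 0 < C₁ ∧
      ∀ f : ℝ → ℝ,
        ContDiffOn ℝ (2 * p) f (Set.Icc 0 γ) →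
        (∀ x ∈ Set.Icc (0:ℝ) γ, 0 ≤ f x) →
        (∀ k < 2 * p, iteratedDerivWithin k f (Set.Icc 0 γ) 0 = 0) →
        ∀ N : ℕ, 1 ≤ N →
          ∀ k ≤ N,
            |dconv2 f (γ / N) k - conv2 f (k * (γ / N))|
              ≤ C₁
                  * (⨆ y ∈ Set.Icc (0:ℝ) (k * (γ / N)),
                      |iteratedDerivWithin (2 * p)
                          (fun z => f z * f (k * (γ / N) - z))
                          (Set.Icc (0:ℝ) (k * (γ / N))) y|)
                  * ((N : ℝ) ^ (2 * p))⁻¹ := by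
  obtain ⟨C, hC, hbound⟩ := em_bound (2 * p) (by omega)
  refine ⟨C * γ ^ (2 * p) * γ, by positivity, ?_⟩
  intro f hf _ hz N hN k hk
  have hN0 : (0 : ℝ) < N := by exact_mod_cast hN
  have hh : 0 < γ / N := by positivity
  have hnn : 0 ≤ (⨆ y ∈ Set.Icc (0:ℝ) (k * (γ / N)),
                      |iteratedDerivWithin (2 * p)
                          (fun z => f z * f (k * (γ / N) - z))
                          (Set.Icc (0:ℝ) (k * (γ / N))) y|) :=
    Real.iSup_nonneg fun y => Real.iSup_nonneg fun _ => abs_nonneg _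
  have hf0 : f 0 = 0 := by simpa using hz 0 (by omega)
  rcases Nat.eq_zero_or_pos k with rfl | hk0
  · have : |dconv2 f (γ / N) 0 - conv2 f ((0 : ℕ) * (γ / N))| = 0 := by
      simp [dconv2, conv2, hf0]
    rw [this]
    exact mul_nonneg (mul_nonneg (by positivity) hnn) (by positivity)
  have hk0' : (0 : ℝ) < k := by exact_mod_cast hk0
  have hkN : (k : ℝ) ≤ N := by exact_mod_cast hk
  have hxγ : k * (γ / N) ≤ γ := by
    calc k * (γ / N) ≤ N * (γ / N) := by gcongr
      _ = γ := by field_simp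
  have hd1 : dconv2 f (γ / N) k = γ / N * ∑ j ∈ Finset.range k,
      (f ((j + 1 : ℕ) * (γ / N)) * f (k * (γ / N) - (j + 1 : ℕ) * (γ / N))) := by
    unfold dconv2
    rw [Finset.sum_range_succ']
    simp only [Nat.cast_zero, zero_mul, hf0, add_zero]
    congr 1
    refine Finset.sum_congr rfl fun j hj => ?_
    rw [Nat.cast_sub (Finset.mem_range.1 hj), sub_mul]
  have hx0 : 0 < k * (γ / N) := by positivity
  rw [hd1, conv2]
  generalize hh' : γ / N = h at *
  generalize hM : (⨆ y ∈ Set.Icc (0:ℝ) (k * h),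
                      |iteratedDerivWithin (2 * p)
                          (fun z => f z * f (k * h - z))
                          (Set.Icc (0:ℝ) (k * h)) y|) = M at *
  obtain ⟨hg, hzero⟩ := conv_deriv_zero (2 * p) γ (k * h) hx0 hxγ f (by exact_mod_cast hf) hz
  have hu : UniqueDiffOn ℝ (Set.Icc 0 (k * h)) := uniqueDiffOn_Icc hx0
  have hcont : ∀ m ≤ 2 * p, ContinuousOn (iteratedDerivWithin m (fun z => f z * f (k * h - z))
      (Set.Icc 0 (k * h))) (Set.Icc 0 (k * h)) := fun m hm =>
    hg.continuousOn_iteratedDerivWithin (by exact_mod_cast hm) hu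
  have hle : ∀ y ∈ Set.Icc 0 (k * h), |iteratedDerivWithin (2 * p)
      (fun z => f z * f (k * h - z)) (Set.Icc (0:ℝ) (k * h)) y| ≤ M := by
    intro y hy
    obtain ⟨A, hA⟩ := isCompact_Icc.exists_bound_of_continuousOn (hcont _ le_rfl)
    have hA0 : 0 ≤ A := (norm_nonneg _).trans (hA y hy)
    rw [← hM]
    refine le_trans ?_ (le_ciSup (f := fun y => ⨆ (_ : y ∈ Set.Icc (0:ℝ) (k * h)),
      |iteratedDerivWithin (2 * p) (fun z => f z * f (k * h - z))
        (Set.Icc (0:ℝ) (k * h)) y|) ?_ y)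
    · simp only [ciSup_pos hy]; exact le_rfl
    · refine ⟨A, ?_⟩
      rintro _ ⟨z, rfl⟩
      exact Real.iSup_le (fun hz => hA z hz) hA0
  have key := hbound h hh k
    (fun m => iteratedDerivWithin m (fun z => f z * f (k * h - z)) (Set.Icc 0 (k * h))) M
    hcont (by
      intro m hm y hy
      have hdiff := hg.differentiableOn_iteratedDerivWithin (m := m) (by exact_mod_cast hm) hu
      have hn : Set.Icc 0 (k * h) ∈ nhds y := Icc_mem_nhds hy.1 hy.2
      have := ((hdiff y ⟨hy.1.le, hy.2.le⟩).hasDerivWithinAt).hasDerivAt hn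
      rw [← iteratedDerivWithin_succ] at this
      exact this)
    (fun m hm => (hzero m hm).1) (fun m hm => (hzero m hm).2) hle
  simp only [iteratedDerivWithin_zero] at key
  refine key.trans ?_
  have e : C * γ ^ (2 * p) * γ * M * ((N : ℝ) ^ (2 * p))⁻¹ = C * h ^ (2 * p) * γ * M := by
    rw [← hh', div_pow]; field_simp
  rw [e]
  gcongr
end

section
/- Let p ≥ 1 be an integer, γ > 0, f ∈ C₀^{2p}([0,γ]) with f ≥ 0, let N ≥ 1 be an integer, h = γ/N, and x_j = j·h. Then for every integer n̄ ≥ 2 and all indices 0 ≤ j ≤ k ≤ N, one has f(x_{k−j}) · C₂(n̄, x_j) ≤ C₂(n̄+1, x_k), where C₂ is the constant mapping defined from f and p. -/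
theorem bddAbove_range_biSup {ι : Type*} (s : Finset ι) (g : ι → ℝ) :
    BddAbove (Set.range fun i => ⨆ (_ : i ∈ s), g i) := by
  refine Set.Finite.bddAbove (((s.finite_toSet.image g).insert 0).subset ?_)
  rintro _ ⟨i, rfl⟩
  by_cases hi : i ∈ s
  · right
    exact ⟨i, hi, by simp [hi]⟩
  · left
    simp [hi]

theorem le_finset_biSup {ι : Type*} (s : Finset ι) (g : ι → ℝ) (i : ι) (hi : i ∈ s) :
    g i ≤ ⨆ i ∈ s, g i := by
  have := le_ciSup (bddAbove_range_biSup s g) i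
  simpa [hi] using this

theorem mul_finset_biSup_le {ι : Type*} (s : Finset ι) (g : ι → ℝ) (c R : ℝ) (hc : 0 ≤ c)
    (hR : 0 ≤ R) (H : ∀ i ∈ s, c * g i ≤ R) : c * (⨆ i ∈ s, g i) ≤ R := by
  rw [Real.mul_iSup_of_nonneg hc]
  refine Real.iSup_le (fun i => ?_) hR
  rw [Real.mul_iSup_of_nonneg hc]
  exact Real.iSup_le (fun hi => H i hi) hR

/-- Monotonicity of the constant mapping `C₂`:
for all `n̄ ≥ 2` and indices `0 ≤ j ≤ k ≤ N`,
`f(x_{k−j}) · C₂(n̄, x_j) ≤ C₂(n̄+1, x_k)`. -/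
theorem C2_mul_le_C2_succ
    (p : ℕ) (hp : 1 ≤ p) (γ : ℝ) (hγ : 0 < γ) (f : ℝ → ℝ)
    (hf_smooth : ContDiffOn ℝ (2 * p) f (Set.Icc 0 γ))
    (hf_nonneg : ∀ x ∈ Set.Icc (0:ℝ) γ, 0 ≤ f x)
    (hf_zero : ∀ k < 2 * p, iteratedDerivWithin k f (Set.Icc 0 γ) 0 = 0)
    (N : ℕ) (hN : 1 ≤ N) :
    ∀ n : ℕ, 2 ≤ n →
      ∀ j k : ℕ, j ≤ k → k ≤ N →
        f (((k - j : ℕ) : ℝ) * (γ / N)) * C2 p f (γ / N) n j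
          ≤ C2 p f (γ / N) (n + 1) k := by
  intro n hn j k hjk hkN
  have hNpos : (0:ℝ) < N := by exact_mod_cast hN
  have hh : 0 < γ / N := div_pos hγ hNpos
  have hpos : ∀ i : ℕ, i ≤ N → 0 ≤ f ((i : ℝ) * (γ / N)) := by
    intro i hi
    apply hf_nonneg
    refine ⟨by positivity, ?_⟩
    have hi' : (i : ℝ) ≤ N := by exact_mod_cast hi
    calc (i : ℝ) * (γ / N) ≤ N * (γ / N) := by gcongr
      _ = γ := by field_simp
  have hc := hpos (k - j) (by omega)
  have hle : ∀ (r l : ℕ) (t : Fin r → ℕ), t ∈ Finset.Nat.antidiagonalTuple r l →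
      ∀ i, t i ≤ l := by
    intro r l t ht i
    rw [Finset.Nat.mem_antidiagonalTuple] at ht
    rw [← ht]
    exact Finset.single_le_sum (fun _ _ => Nat.zero_le _) (Finset.mem_univ i)
  have hR : 0 ≤ C2 p f (γ / N) (n + 1) k := by
    unfold C2
    refine Real.iSup_nonneg fun m => Real.iSup_nonneg fun _ => Real.iSup_nonneg fun t =>
      Real.iSup_nonneg fun ht => mul_nonneg ?_ ?_
    · exact Real.iSup_nonneg fun y => Real.iSup_nonneg fun _ => abs_nonneg _
    · exact Finset.prod_nonneg fun i _ => hpos _ ((hle _ _ t ht i).trans hkN)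
  rw [C2]
  refine mul_finset_biSup_le _ _ _ _ hc hR fun m hm => ?_
  refine mul_finset_biSup_le _ _ _ _ hc hR fun t ht => ?_
  rw [Finset.mem_range] at hm
  unfold C2
  refine le_trans ?_ (le_finset_biSup _ _ (m + 1) (Finset.mem_range.2 (by omega)))
  refine le_trans ?_ (le_finset_biSup _ _ (Fin.snoc t (k - j) : Fin (m + 1 + 1) → ℕ) ?_)
  · have h0 : (Fin.snoc t (k - j) : Fin (m + 1 + 1) → ℕ) 0 = t 0 := by
      rw [← Fin.castSucc_zero]
      exact Fin.snoc_castSucc (α := fun _ => ℕ) (k - j) t 0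
    have hn' : n + 1 - 1 - (m + 1) = n - 1 - m := by omega
    rw [h0, hn']
    have hprod : ∏ i ∈ Finset.univ.filter (fun i : Fin (m + 1 + 1) => i ≠ 0),
          f (((Fin.snoc t (k - j) : Fin (m + 1 + 1) → ℕ) i : ℝ) * (γ / N))
        = (∏ i ∈ Finset.univ.filter (fun i : Fin (m + 1) => i ≠ 0), f ((t i : ℝ) * (γ / N)))
          * f (((k - j : ℕ) : ℝ) * (γ / N)) := by
      rw [Finset.prod_filter, Finset.prod_filter, Fin.prod_univ_castSucc]
      have hl : Fin.last (m + 1) ≠ 0 := Fin.last_pos.ne'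
      simp only [Fin.snoc_castSucc, Fin.snoc_last, hl, ne_eq, not_false_eq_true, if_true,
        Fin.castSucc_eq_zero_iff]
    rw [hprod]
    apply le_of_eq
    ring
  · rw [Finset.Nat.mem_antidiagonalTuple] at ht ⊢
    rw [Fin.sum_univ_castSucc]
    simp only [Fin.snoc_castSucc, Fin.snoc_last]
    omega
end

section
/- Let ε > 0 and let fl : ℝ → ℝ satisfy |fl(z) − z| ≤ ε|z| for all z ∈ ℝ. Let k ≥ 1, let t_0, t_1, …, t_k ≥ 0 be nonnegative real numbers with S_k = Σ_{j=0}^k t_j, let c_t > 0 and let t̂_0, …, t̂_k ∈ ℝ satisfy |t̂_j − t_j| ≤ t_j·c_t·ε for all j. Define the computed partial sums ŝ_0 = t̂_0 and ŝ_m = fl( ŝ_{m−1} + t̂_m ) for m = 1,…,k. If (k + c_t)·ε < 1, then |ŝ_k − S_k| ≤ S_k·( k + c_t )·ε·( 1 + k·ε ). -/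
/-- Rounding-error propagation for a recursively accumulated sum of `k+1`
already-approximated nonnegative terms, in a floating-point model `fl` with machine
epsilon `ε` (`|fl(z) − z| ≤ ε|z|` for all `z`): if `(k + c_t)·ε < 1` then
`|shat_k − S_k| ≤ S_k·(k + c_t)·ε·(1 + k·ε)`. -/
theorem accumulated_sum_rounding_error
    (ε : ℝ) (hε : 0 < ε) (fl : ℝ → ℝ) (hfl : ∀ z : ℝ, |fl z - z| ≤ ε * |z|)
    (k : ℕ) (hk : 1 ≤ k)
    (t : ℕ → ℝ) (ht : ∀ j ≤ k, 0 ≤ t j)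
    (ct : ℝ) (hct : 0 < ct)
    (that : ℕ → ℝ) (hthat : ∀ j ≤ k, |that j - t j| ≤ t j * ct * ε)
    (shat : ℕ → ℝ) (hshat0 : shat 0 = that 0)
    (hshat : ∀ m : ℕ, 1 ≤ m → m ≤ k → shat m = fl (shat (m - 1) + that m))
    (hcond : ((k : ℝ) + ct) * ε < 1) :
    |shat k - ∑ j ∈ Finset.range (k + 1), t j|
      ≤ (∑ j ∈ Finset.range (k + 1), t j) * ((k : ℝ) + ct) * ε * (1 + k * ε) := by
  have hy : 0 < ct * ε := mul_pos hct hε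
  have hone : ∀ m : ℕ, 1 ≤ (1 + ε) ^ m := fun m => one_le_pow₀ (by linarith)
  have hS : ∀ m ≤ k, 0 ≤ ∑ j ∈ Finset.range (m + 1), t j := by
    intro m hm
    apply Finset.sum_nonneg
    intro j hj
    have := Finset.mem_range.mp hj
    exact ht j (by omega)
  have key : ∀ m ≤ k, |shat m - ∑ j ∈ Finset.range (m + 1), t j|
      ≤ (∑ j ∈ Finset.range (m + 1), t j) * ((1 + ε) ^ m * (1 + ct * ε) - 1) := by
    intro m
    induction m with
    | zero =>
      intro _
      have h := hthat 0 (Nat.zero_le _)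
      simp only [zero_add, Finset.sum_range_one, pow_zero, hshat0]
      linarith
    | succ m ih =>
      intro hm
      have h1 := ih (by omega)
      have h2 := hS m (by omega)
      have h3 := ht (m + 1) hm
      have h4 := hthat (m + 1) hm
      have h5 := hshat (m + 1) (by omega) hm
      rw [Nat.add_sub_cancel] at h5
      rw [Finset.sum_range_succ _ (m + 1), h5, pow_succ]
      have h6 := hfl (shat m + that (m + 1))
      have hP := hone m
      generalize (∑ j ∈ Finset.range (m + 1), t j) = S at *
      generalize (1 + ε) ^ m = P at *
      have hz : |shat m + that (m + 1) - (S + t (m + 1))|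
          ≤ (S + t (m + 1)) * (P * (1 + ct * ε) - 1) := by
        have e : shat m + that (m + 1) - (S + t (m + 1))
            = (shat m - S) + (that (m + 1) - t (m + 1)) := by ring
        rw [e]
        refine (abs_add_le _ _).trans ?_
        nlinarith [mul_nonneg h3 (mul_nonneg (sub_nonneg.mpr hP) (by linarith : 0 ≤ 1 + ct * ε))]
      generalize shat m + that (m + 1) = z at *
      have e1 : |z| ≤ |z - (S + t (m + 1))| + (S + t (m + 1)) := by
        have := abs_add_le (z - (S + t (m + 1))) (S + t (m + 1))
        rwa [sub_add_cancel, abs_of_nonneg (add_nonneg h2 h3)] at this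
      have e2 := abs_sub_le (fl z) z (S + t (m + 1))
      have e3 := mul_le_mul_of_nonneg_left (e1.trans (add_le_add_left hz _)) hε.le
      linarith
  have pade : ∀ m ≤ k, (1 + ε) ^ m * (2 - m * ε) ≤ 2 + m * ε := by
    intro m
    induction m with
    | zero => intro _; simp
    | succ m ih =>
      intro hm
      have h1 := ih (by omega)
      have hmk : ((m : ℝ) + 1) ≤ k := by exact_mod_cast hm
      have hx : ((m : ℝ) + 1) * ε ≤ k * ε := by gcongr
      have hx0 : 0 ≤ (m : ℝ) * ε := by positivity
      have hP := hone m
      rw [pow_succ]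
      push_cast
      rw [add_mul, one_mul] at *
      generalize (m : ℝ) * ε = x at *
      generalize (1 + ε) ^ m = P at *
      have hb : 0 < 2 - x := by linarith
      have hc : 0 ≤ (1 + ε) * (2 - (x + ε)) := mul_nonneg (by linarith) (by linarith)
      have h2 := mul_le_mul_of_nonneg_right h1 hc
      refine le_of_mul_le_mul_right (a := 2 - x) ?_ hb
      nlinarith [mul_nonneg hε.le (sq_nonneg x), mul_nonneg (sq_nonneg ε) hx0, sq_nonneg ε]
  refine (key k le_rfl).trans ?_
  have h1 := pade k le_rfl
  have h2 : 1 + k * ε ≤ (1 + ε) ^ k := one_add_mul_le_pow (by linarith) k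
  have h3 := hS k le_rfl
  rw [mul_assoc, mul_assoc]
  apply mul_le_mul_of_nonneg_left _ h3
  rw [← mul_assoc]
  rw [add_mul] at *
  generalize (k : ℝ) * ε = x at *
  generalize (1 + ε) ^ k = P at *
  nlinarith [mul_nonneg (sub_nonneg.mpr h2) (by linarith : 0 ≤ 1 - x - ct * ε)]
end
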